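/- Let S = R[A, B, C] be a polynomial ring graded with deg A = deg B = deg C = 1, and let f = x^α A + y^β B + z^γ C, g = y^{β'} A + z^{γ'} B + x^{α'} C. Then f, g is a regular sequence on S, and S/(f,g)S is isomorphic as a graded R-algebra to the Rees algebra R[It], where I = (a,b,c) is the ideal of maximal minors. -/

import Mathlib

open IsLocalRing Polynomial

/-!
Write `u, v, w` and `u', v', w'` for the two rows of the matrix. Eliminating `A` from `f` and `g`
gives `u' f - u g = c B - b C`. Multiplying by a power of `u'`, every polynomial becomes congruent
modulo `g` to one in `B` and `C` alone, and if the former is in the kernel of `π`, so is the latter.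
By the same elimination the kernel of `B ↦ b t, C ↦ c t` is generated by `c B - b C`, because
`c, b` is a regular sequence. The power of `u'` cancels because `u', f, g` is a regular sequence
and therefore `u'` is regular modulo `(f, g)`: regular elements move to the front of a regular
sequence even in a ring that is not local.

A polynomial one of whose coefficients is regular modulo an ideal of constants is itself regular
modulo that ideal, so all conditions descend to `R`. There they follow from the regularity of
`x, y, z` by taking powers and permuting; for `c, b` one works modulo `z`, where `c ≡ y ^ (β + β')`
and `b ≡ x ^ (α + α')`.
-/

open RingTheory.Sequence
open scoped Matrix nonZeroDivisors

section RegularSequences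

variable {R S M : Type*} [CommRing R] [CommRing S] [AddCommGroup M] [Module R M]

theorem isSMulRegular_quotSMulTop_comm {r s : R} (hr : IsSMulRegular M r)
    (hs : IsSMulRegular (QuotSMulTop r M) s) : IsSMulRegular (QuotSMulTop s M) r := by
  rw [isSMulRegular_quotient_iff_mem_of_smul_mem] at hs ⊢
  intro m hm
  obtain ⟨n, -, hn⟩ := Submodule.mem_smul_pointwise_iff_exists _ _ _ |>.1 hm
  obtain ⟨k, -, rfl⟩ := Submodule.mem_smul_pointwise_iff_exists _ _ _ |>.1
    (hs n (hn ▸ Submodule.smul_mem_pointwise_smul m r ⊤ trivial))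
  rw [smul_comm] at hn
  exact hr hn ▸ Submodule.smul_mem_pointwise_smul k s ⊤ trivial

theorem isSMulRegular_quotient_ofList {r : R} {rs : List R} (h : IsWeaklyRegular M (r :: rs)) :
    IsSMulRegular (M ⧸ (Ideal.ofList rs • ⊤ : Submodule R M)) r := by
  induction rs using List.reverseRecOn with
  | nil => exact h.regular_mod_prev 0 (by simp)
  | append_singleton rs s ih =>
    rw [← List.cons_append, isWeaklyRegular_append_iff, isWeaklyRegular_singleton_iff,
      (Submodule.quotOfListConsSMulTopEquivQuotSMulTopOuter M r rs).isSMulRegular_congr] at h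
    have hr := isSMulRegular_quotSMulTop_comm (ih h.1) h.2
    rw [← (Submodule.quotOfListConsSMulTopEquivQuotSMulTopOuter M s rs).isSMulRegular_congr,
      Ideal.ofList_cons, sup_comm] at hr
    rwa [Ideal.ofList_append, Ideal.ofList_singleton]

theorem isWeaklyRegular_of_append {rs rs' : List R} (h : IsWeaklyRegular M (rs ++ rs')) :
    IsWeaklyRegular M rs :=
  ((isWeaklyRegular_append_iff M rs rs').1 h).1

theorem isWeaklyRegular_concat_iff {r : R} {rs : List R} :
    IsWeaklyRegular R (rs ++ [r]) ↔
      IsWeaklyRegular R rs ∧ ∀ s, r * s ∈ Ideal.ofList rs → s ∈ Ideal.ofList rs := by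
  rw [isWeaklyRegular_append_iff, isWeaklyRegular_singleton_iff,
    isSMulRegular_quotient_iff_mem_of_smul_mem]
  simp only [smul_eq_mul, Ideal.mul_top]

theorem mem_ofList_of_pow_mul_mem {r : R} {rs : List R}
    (h : IsWeaklyRegular R (r :: rs)) {n : ℕ} {s : R} (hs : r ^ n * s ∈ Ideal.ofList rs) :
    s ∈ Ideal.ofList rs := by
  have := (isSMulRegular_quotient_ofList h).pow n
  rw [isSMulRegular_quotient_iff_mem_of_smul_mem, smul_eq_mul, Ideal.mul_top] at this
  exact this s hs

open Pointwise in
theorem isWeaklyRegular_cons_iff_of_surjective {φ : R →+* S} (hφ : Function.Surjective φ) {r : R}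
    (hker : RingHom.ker φ = Ideal.span {r}) (rs : List R) :
    IsWeaklyRegular R (r :: rs) ↔ IsSMulRegular R r ∧ IsWeaklyRegular S (rs.map φ) := by
  have h : (r • ⊤ : Submodule R R) = RingHom.ker φ := by
    rw [hker, ← Submodule.ideal_span_singleton_smul, smul_eq_mul, Ideal.mul_top]
  let e : QuotSMulTop r R ≃+ S := (Submodule.quotEquivOfEq _ _ h).toAddEquiv.trans
    (RingHom.quotientKerEquivOfSurjective hφ).toAddEquiv
  rw [isWeaklyRegular_cons_iff]
  refine and_congr_right fun _ ↦ e.isWeaklyRegular_congr ?_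
  rw [List.forall₂_map_right_iff, List.forall₂_same]
  rintro a - ⟨b⟩
  exact map_mul φ a b

theorem isWeaklyRegular_map_ringEquiv_iff (e : R ≃+* S) (rs : List R) :
    IsWeaklyRegular S (rs.map e) ↔ IsWeaklyRegular R rs :=
  (e.toAddEquiv.isWeaklyRegular_congr <| List.forall₂_map_right_iff.2 <|
    List.forall₂_same.2 fun r _ x ↦ map_mul e r x).symm

theorem isWeaklyRegular_cons_iff_quotient {r : R} {rs : List R} :
    IsWeaklyRegular R (r :: rs) ↔
      IsSMulRegular R r ∧
        IsWeaklyRegular (R ⧸ Ideal.span {r}) (rs.map (Ideal.Quotient.mk (Ideal.span {r}))) :=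
  isWeaklyRegular_cons_iff_of_surjective Ideal.Quotient.mk_surjective Ideal.mk_ker rs

theorem isRegular_of_forall_map_eq_zero {rs : List R} (h : IsWeaklyRegular R rs) [Nontrivial S]
    (φ : R →+* S) (hφ : ∀ r ∈ rs, φ r = 0) : IsRegular R rs := by
  refine ⟨h, fun htop ↦ RingHom.ker_ne_top φ (top_le_iff.1 ?_)⟩
  rw [htop, smul_eq_mul, Ideal.mul_top]
  exact Ideal.span_le.2 hφ

section Local

variable [IsLocalRing R]

theorem mem_maximalIdeal_of_isRegular {rs : List R} (h : IsRegular R rs) {r : R} (hr : r ∈ rs) :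
    r ∈ maximalIdeal R := by
  refine le_maximalIdeal (J := Ideal.ofList rs) (fun htop ↦ h.top_ne_smul ?_)
    (Ideal.subset_span hr)
  rw [htop, Submodule.top_smul]

variable [IsNoetherianRing R]

theorem isRegular_concat_pow {r : R} {rs : List R} (h : IsRegular R (r :: rs)) {n : ℕ}
    (hn : n ≠ 0) : IsRegular R (rs ++ [r ^ n]) := by
  have hperm := isRegular_of_perm h (List.perm_append_singleton r rs).symm
  refine IsRegular.of_isWeaklyRegular_of_mem_maximalIdeal R ?_ ?_
  · simp only [List.mem_append, List.mem_singleton]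
    rintro s (hs | rfl)
    · exact mem_maximalIdeal_of_isRegular h (List.mem_cons_of_mem r hs)
    · exact Ideal.pow_mem_of_mem _ (mem_maximalIdeal_of_isRegular h List.mem_cons_self) n
        (Nat.pos_of_ne_zero hn)
  · have := hperm.toIsWeaklyRegular
    rw [isWeaklyRegular_append_iff, isWeaklyRegular_singleton_iff] at this ⊢
    exact ⟨this.1, this.2.pow n⟩

theorem isRegular_pow_triple {x y z : R} (h : IsRegular R [x, y, z]) {i j k : ℕ} (hi : i ≠ 0)
    (hj : j ≠ 0) (hk : k ≠ 0) : IsRegular R [x ^ i, y ^ j, z ^ k] :=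
  isRegular_concat_pow (isRegular_concat_pow (isRegular_concat_pow h hi) hj) hk

theorem isRegular_sub_triple {p q r s t : R} (h : IsRegular R [p, q, r]) (hs : r ∣ s)
    (ht : r ∣ t) : IsRegular R [p - s, q - t, r] := by
  have hm {w : R} (hw : w ∈ [p, q, r]) := mem_maximalIdeal_of_isRegular h hw
  have hr := hm (w := r) (by simp)
  have hperm := (isRegular_of_perm h (List.perm_append_singleton r [p, q])).toIsWeaklyRegular
  refine isRegular_of_perm (IsRegular.of_isWeaklyRegular_of_mem_maximalIdeal R ?_ ?_)
    (List.perm_append_singleton r [p - s, q - t]).symm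
  · simp only [List.forall_mem_cons]
    exact ⟨hr, sub_mem (hm (by simp)) (Ideal.mem_of_dvd _ hs hr),
      sub_mem (hm (by simp)) (Ideal.mem_of_dvd _ ht hr), by simp⟩
  · rw [isWeaklyRegular_cons_iff_quotient] at hperm ⊢
    have hs' := Ideal.Quotient.eq_zero_iff_mem.2 (Ideal.mem_span_singleton.2 hs)
    have ht' := Ideal.Quotient.eq_zero_iff_mem.2 (Ideal.mem_span_singleton.2 ht)
    simpa [hs', ht'] using hperm

theorem isRegular_minors {x y z : R} (h : IsRegular R [x, y, z]) {α γ α' β β' γ' : ℕ} (hγ : 0 < γ)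
    (hα' : 0 < α') (hβ' : 0 < β') (hγ' : 0 < γ') :
    IsRegular R [y ^ (β + β') - x ^ α * z ^ γ', x ^ (α + α') - y ^ β' * z ^ γ, z] := by
  have hpow : IsRegular R [y ^ (β + β'), x ^ (α + α'), z ^ 1] :=
    isRegular_pow_triple (isRegular_of_perm h (.swap y x [z])) (by omega) (by omega) one_ne_zero
  rw [pow_one] at hpow
  exact isRegular_sub_triple hpow (dvd_mul_of_dvd_right (dvd_pow_self z hγ'.ne') _)
    (dvd_mul_of_dvd_right (dvd_pow_self z hγ.ne') _)

end Local

end RegularSequences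

section LinearPolynomials

variable {D : Type*} [CommRing D]

theorem exists_C_pow_mul_eq_linear_mul_add_C (u v : D) (q : D[X]) :
    ∃ (n : ℕ) (p : D[X]) (t : D), C u ^ n * q = (C u * X + C v) * p + C t := by
  induction q using Polynomial.induction_on' with
  | add q₁ q₂ h₁ h₂ =>
    obtain ⟨n₁, p₁, t₁, h₁⟩ := h₁
    obtain ⟨n₂, p₂, t₂, h₂⟩ := h₂
    refine ⟨n₁ + n₂, C u ^ n₂ * p₁ + C u ^ n₁ * p₂, u ^ n₂ * t₁ + u ^ n₁ * t₂, ?_⟩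
    simp only [map_add, map_mul, map_pow]
    linear_combination C u ^ n₂ * h₁ + C u ^ n₁ * h₂
  | monomial n d =>
    induction n with
    | zero => exact ⟨0, 0, d, by simp⟩
    | succ n ih =>
      obtain ⟨N, p, t, h⟩ := ih
      refine ⟨N + 1, C u * X * p + C t, -(v * t), ?_⟩
      rw [← monomial_mul_X]
      simp only [map_neg, map_mul]
      linear_combination C u * X * h

theorem mem_ideal_map_C_iff (J : Ideal D) (q : D[X]) :
    q ∈ J.map C ↔ q.map (Ideal.Quotient.mk J) = 0 := by
  rw [← coe_mapRingHom, ← RingHom.mem_ker, ker_mapRingHom, Ideal.mk_ker]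

theorem isWeaklyRegular_map_C_concat {rs : List D} {p : D[X]} (n : ℕ)
    (h : IsWeaklyRegular D (rs ++ [p.coeff n])) : IsWeaklyRegular D[X] (rs.map C ++ [p]) := by
  rw [isWeaklyRegular_concat_iff] at h ⊢
  refine ⟨h.1.of_flat, fun q hq ↦ ?_⟩
  have hp : p.map (Ideal.Quotient.mk (Ideal.ofList rs)) ∈ (D ⧸ Ideal.ofList rs)[X]⁰ := by
    refine mem_nonzeroDivisors_of_coeff_mem n (mem_nonZeroDivisors_iff_left.2 fun t ht ↦ ?_)
    obtain ⟨t, rfl⟩ := Ideal.Quotient.mk_surjective t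
    rw [coeff_map, ← map_mul, Ideal.Quotient.eq_zero_iff_mem] at ht
    exact Ideal.Quotient.eq_zero_iff_mem.2 (h.2 t ht)
  rw [← Ideal.map_ofList, mem_ideal_map_C_iff] at hq ⊢
  rwa [Polynomial.map_mul, mul_left_mem_nonZeroDivisors_eq_zero_iff hp] at hq

theorem isWeaklyRegular_map_mvPolynomial_C_concat {n : ℕ} {rs : List D}
    {p : MvPolynomial (Fin n) D} (m : Fin n →₀ ℕ)
    (h : IsWeaklyRegular D (rs ++ [p.coeff m])) :
    IsWeaklyRegular (MvPolynomial (Fin n) D) (rs.map MvPolynomial.C ++ [p]) := by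
  induction n with
  | zero =>
    rw [← isWeaklyRegular_map_ringEquiv_iff (MvPolynomial.isEmptyRingEquiv D (Fin 0))]
    convert h using 1
    simp [Subsingleton.elim m 0, -MvPolynomial.isEmptyRingEquiv_apply,
      MvPolynomial.isEmptyRingEquiv_eq_coeff_zero, Function.comp_def]
  | succ n ih =>
    rw [← m.cons_tail, ← MvPolynomial.finSuccEquiv_coeff_coeff] at h
    have := isWeaklyRegular_map_C_concat _ (ih _ h)
    rw [← isWeaklyRegular_map_ringEquiv_iff (MvPolynomial.finSuccEquiv D n).toRingEquiv]
    convert this using 1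
    simp [MvPolynomial.finSuccEquiv_apply]

theorem eq_zero_of_linear_dvd_C {u v t : D} (hu : IsSMulRegular D u)
    (h : C u * X + C v ∣ C t) : t = 0 := by
  obtain ⟨s, hs⟩ := h
  nontriviality D
  have hu0 : u ≠ 0 := (isLeftRegular_iff.2 hu).ne_zero
  have : s = 0 := by
    by_contra hs0
    have hlead : (C u * X + C v).leadingCoeff * s.leadingCoeff ≠ 0 := by
      rw [leadingCoeff_linear hu0]
      exact fun h0 ↦ hs0 (leadingCoeff_eq_zero.1 (hu.right_eq_zero_of_smul h0))
    have := congrArg natDegree hs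
    rw [natDegree_mul' hlead, natDegree_linear hu0, natDegree_C] at this
    omega
  simpa [this] using hs

theorem isWeaklyRegular_linear_pair {u v u' v' : D} (h : IsWeaklyRegular D [u, v])
    (hdet : IsSMulRegular D (u * v' - u' * v)) :
    IsWeaklyRegular D[X] [C u * X + C v, C u' * X + C v'] := by
  have hu : IsSMulRegular D u := (isWeaklyRegular_cons_iff D u [v]).1 h |>.1
  have hf : IsWeaklyRegular D[X] [C u * X + C v] :=
    isWeaklyRegular_map_C_concat (rs := []) 1 (by simpa using hu)
  have hCu : IsWeaklyRegular D[X] [C u, C u * X + C v] :=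
    isWeaklyRegular_map_C_concat (rs := [u]) 0 (by simpa using h)
  refine isWeaklyRegular_concat_iff (rs := [_]).2 ⟨hf, fun q hq ↦ ?_⟩
  obtain ⟨n, p, t, hpt⟩ := exists_C_pow_mul_eq_linear_mul_add_C u v q
  have ht : t = 0 := by
    rw [Ideal.ofList_singleton, Ideal.mem_span_singleton] at hq
    obtain ⟨s, hs⟩ := hq
    refine hdet.right_eq_zero_of_smul (eq_zero_of_linear_dvd_C (v := v) hu
      ⟨C u ^ (n + 1) * s - C u ^ n * C u' * q - C (u * v' - u' * v) * p, ?_⟩)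
    simp only [smul_eq_mul, map_mul, map_sub]
    linear_combination C u ^ (n + 1) * hs - (C u * C v' - C u' * C v) * hpt
  refine mem_ofList_of_pow_mul_mem hCu (n := n) ?_
  rw [hpt, ht, map_zero, add_zero, Ideal.ofList_singleton]
  exact Ideal.mem_span_singleton.2 (dvd_mul_right _ p)

theorem isWeaklyRegular_C_linear_pair {u v u' v' : D} (h : IsWeaklyRegular D [u', u, v])
    (h' : IsWeaklyRegular D [u', v']) :
    IsWeaklyRegular D[X] [C u', C u * X + C v, C u' * X + C v'] := by
  rw [isWeaklyRegular_cons_iff_quotient] at h h'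
  have hker : RingHom.ker (mapRingHom (Ideal.Quotient.mk (Ideal.span {u'}))) =
      Ideal.span {C u'} := by
    rw [ker_mapRingHom, Ideal.mk_ker, Ideal.map_span, Set.image_singleton]
  have hu' : Ideal.Quotient.mk (Ideal.span {u'}) u' = 0 :=
    Ideal.Quotient.eq_zero_iff_mem.2 (Ideal.mem_span_singleton_self u')
  rw [isWeaklyRegular_cons_iff_of_surjective (map_surjective _ Ideal.Quotient.mk_surjective) hker]
  refine ⟨(isWeaklyRegular_singleton_iff _ _).1
    (isWeaklyRegular_map_C_concat (rs := []) 0 (by simpa using h.1)), ?_⟩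
  have hu := (isWeaklyRegular_cons_iff _ _ _).1 h.2 |>.1
  have hv' := (isWeaklyRegular_cons_iff _ _ _).1 h'.2 |>.1
  simpa [hu'] using isWeaklyRegular_linear_pair (u' := 0) h.2 (by simpa using hu.mul hv')

end LinearPolynomials

section LinearForms

variable {R E : Type*} [CommRing R] [CommRing E] {n : ℕ}

/-- The linear form `∑ i, u i * X i` in the polynomial ring over `R`. -/
noncomputable def linearForm {σ : Type*} [Fintype σ] (u : σ → R) : MvPolynomial σ R :=
  ∑ i, MvPolynomial.C (u i) * MvPolynomial.X i

theorem coeff_linearForm {σ : Type*} [Fintype σ] (u : σ → R) (i : σ) :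
    (linearForm u).coeff (Finsupp.single i 1) = u i := by
  classical
  simp [linearForm, MvPolynomial.coeff_sum, MvPolynomial.coeff_X, Finsupp.single_left_inj]

theorem mvPolynomial_finSuccEquiv_C (r : R) :
    MvPolynomial.finSuccEquiv R n (MvPolynomial.C r) = C (MvPolynomial.C r) :=
  (MvPolynomial.finSuccEquiv R n).commutes r

theorem mvPolynomial_finSuccEquiv_rename_succ (t : MvPolynomial (Fin n) R) :
    MvPolynomial.finSuccEquiv R n (MvPolynomial.rename Fin.succ t) = C t := by
  induction t using MvPolynomial.induction_on <;>
    simp_all [mvPolynomial_finSuccEquiv_C, MvPolynomial.finSuccEquiv_X_succ]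

theorem mvPolynomial_finSuccEquiv_linearForm (u : Fin (n + 1) → R) :
    MvPolynomial.finSuccEquiv R n (linearForm u) =
      C (MvPolynomial.C (u 0)) * X + C (linearForm (Fin.tail u)) := by
  simp [linearForm, Fin.sum_univ_succ, mvPolynomial_finSuccEquiv_C,
    MvPolynomial.finSuccEquiv_X_zero, MvPolynomial.finSuccEquiv_X_succ, Fin.tail]

theorem isWeaklyRegular_map_C_linearForm {rs : List R} {u : Fin n → R} (i : Fin n)
    (h : IsWeaklyRegular R (rs ++ [u i])) :
    IsWeaklyRegular (MvPolynomial (Fin n) R) (rs.map MvPolynomial.C ++ [linearForm u]) :=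
  isWeaklyRegular_map_mvPolynomial_C_concat (Finsupp.single i 1) (by rwa [coeff_linearForm])

theorem isWeaklyRegular_linearForm_pair {u u' : Fin (n + 1) → R} (i : Fin n)
    (h : IsWeaklyRegular R [u 0, u i.succ])
    (hminor : IsSMulRegular R (u 0 * u' i.succ - u' 0 * u i.succ)) :
    IsWeaklyRegular (MvPolynomial (Fin (n + 1)) R) [linearForm u, linearForm u'] := by
  rw [← isWeaklyRegular_map_ringEquiv_iff (MvPolynomial.finSuccEquiv R n).toRingEquiv]
  simp only [List.map_cons, List.map_nil, AlgEquiv.coe_ringEquiv,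
    mvPolynomial_finSuccEquiv_linearForm]
  refine isWeaklyRegular_linear_pair (isWeaklyRegular_map_C_linearForm (rs := [u 0]) i h) ?_
  rw [← isWeaklyRegular_singleton_iff]
  refine isWeaklyRegular_map_mvPolynomial_C_concat (rs := []) (Finsupp.single i 1) ?_
  simpa [coeff_linearForm, Fin.tail] using hminor

theorem isWeaklyRegular_C_linearForm_pair {u u' : Fin (n + 1) → R} (i : Fin n)
    (h : IsWeaklyRegular R [u' 0, u 0, u i.succ]) (h' : IsWeaklyRegular R [u' 0, u' i.succ]) :
    IsWeaklyRegular (MvPolynomial (Fin (n + 1)) R)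
      [MvPolynomial.C (u' 0), linearForm u, linearForm u'] := by
  rw [← isWeaklyRegular_map_ringEquiv_iff (MvPolynomial.finSuccEquiv R n).toRingEquiv]
  simp only [List.map_cons, List.map_nil, AlgEquiv.coe_ringEquiv,
    mvPolynomial_finSuccEquiv_linearForm, mvPolynomial_finSuccEquiv_C]
  exact isWeaklyRegular_C_linear_pair
    (isWeaklyRegular_map_C_linearForm (rs := [u' 0, u 0]) (u := Fin.tail u) i h)
    (isWeaklyRegular_map_C_linearForm (rs := [u' 0]) (u := Fin.tail u') i h')

theorem ker_eq_ofList_of_linearForm_mem {F : Type*} [FunLike F (MvPolynomial (Fin (n + 1)) R) E]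
    [RingHomClass F (MvPolynomial (Fin (n + 1)) R) E] {φ : F}
    {u : Fin (n + 1) → R} {rs : List (MvPolynomial (Fin (n + 1)) R)}
    (hu : IsWeaklyRegular (MvPolynomial (Fin (n + 1)) R) (MvPolynomial.C (u 0) :: rs))
    (hlin : linearForm u ∈ Ideal.ofList rs) (hker : Ideal.ofList rs ≤ RingHom.ker φ)
    (hsucc : ∀ t, φ (MvPolynomial.rename Fin.succ t) = 0 →
      MvPolynomial.rename Fin.succ t ∈ Ideal.ofList rs) :
    RingHom.ker φ = Ideal.ofList rs := by
  refine le_antisymm (fun q hq ↦ ?_) hker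
  let e := MvPolynomial.finSuccEquiv R n
  obtain ⟨N, p, t, h⟩ := exists_C_pow_mul_eq_linear_mul_add_C (MvPolynomial.C (u 0))
    (linearForm (Fin.tail u)) (e q)
  replace h : MvPolynomial.C (u 0) ^ N * q =
      linearForm u * e.symm p + MvPolynomial.rename Fin.succ t := e.injective <| by
    simp only [e, map_mul, map_pow, map_add, mvPolynomial_finSuccEquiv_C,
      mvPolynomial_finSuccEquiv_linearForm, mvPolynomial_finSuccEquiv_rename_succ,
      AlgEquiv.apply_symm_apply]
    exact h
  have ht : φ (MvPolynomial.rename Fin.succ t) = 0 := by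
    have := congrArg φ h
    rwa [map_mul, map_add, map_mul, hq, hker hlin, mul_zero, zero_mul, zero_add, eq_comm] at this
  exact mem_ofList_of_pow_mul_mem hu (h ▸ add_mem (Ideal.mul_mem_right _ _ hlin) (hsucc t ht))

/-- The map `R[X_i] → R[t]`, `X_i ↦ m_i t`, whose image is the Rees algebra of the ideal generated
by the `m_i`. -/
noncomputable def reesMap {σ : Type*} (m : σ → R) : MvPolynomial σ R →ₐ[R] R[X] :=
  MvPolynomial.aeval fun i ↦ C (m i) * X

theorem range_reesMap {σ : Type*} (m : σ → R) :
    (reesMap m).range = reesAlgebra (Ideal.span (Set.range m)) := by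
  rw [reesMap, MvPolynomial.aeval_range, ← adjoin_monomial_eq_reesAlgebra, Ideal.span,
    Submodule.map_span, Algebra.adjoin_span, ← Set.range_comp]
  simp only [Function.comp_def, C_mul_X_eq_monomial]

theorem reesMap_linearForm {σ : Type*} [Fintype σ] (m u : σ → R) :
    reesMap m (linearForm u) = C (u ⬝ᵥ m) * X := by
  simp [reesMap, linearForm, dotProduct, Finset.sum_mul, mul_assoc, algebraMap_eq]

theorem reesMap_rename_succ (m : Fin (n + 1) → R) (t : MvPolynomial (Fin n) R) :
    reesMap m (MvPolynomial.rename Fin.succ t) = reesMap (Fin.tail m) t :=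
  MvPolynomial.aeval_rename ..

theorem reesMap_injective {σ : Type*} [Unique σ] {m : σ → R} (hm : IsSMulRegular R (m default)) :
    Function.Injective (reesMap m) := by
  have h (t) : reesMap m t = (MvPolynomial.uniqueAlgEquiv R σ t).comp (C (m default) * X) := by
    induction t using MvPolynomial.induction_on <;>
      simp_all [reesMap, Unique.eq_default, algebraMap_eq]
  replace hm : m default ∈ R⁰ :=
    mem_nonZeroDivisors_iff_left.2 fun _ ↦ hm.right_eq_zero_of_smul
  refine (injective_iff_map_eq_zero _).2 fun t ht ↦ ?_
  rwa [h, comp_C_mul_X_eq_zero_iff hm, EmbeddingLike.map_eq_zero_iff] at ht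

theorem ker_reesMap_pair {m : Fin 2 → R} (h : IsWeaklyRegular R [m 1, m 0]) :
    RingHom.ker (reesMap m) = Ideal.ofList [linearForm ![m 1, -m 0]] := by
  have hneg : IsWeaklyRegular R [m 1, -m 0] := by
    have := isWeaklyRegular_concat_iff (rs := [m 1]).1 h
    exact isWeaklyRegular_concat_iff (rs := [m 1]).2 (by simpa using this)
  refine ker_eq_ofList_of_linearForm_mem (u := ![m 1, -m 0])
    (isWeaklyRegular_map_C_linearForm (rs := [m 1]) 1 hneg) (Ideal.subset_span (by simp)) ?_
    fun t ht ↦ ?_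
  · simp [RingHom.mem_ker, reesMap_linearForm, dotProduct, mul_comm]
  · rw [reesMap_rename_succ] at ht
    have := reesMap_injective (m := Fin.tail m) ((isWeaklyRegular_cons_iff _ _ _).1 h).1
      (ht.trans (map_zero _).symm)
    simp [this]

theorem ker_reesMap_crossProduct {u u' : Fin 3 → R} (h : IsWeaklyRegular R [u' 0, u 0, u 2])
    (h' : IsWeaklyRegular R [u' 0, u' 2])
    (hminor : IsWeaklyRegular R [(u' ⨯₃ u) 2, (u' ⨯₃ u) 1]) :
    RingHom.ker (reesMap (u' ⨯₃ u)) = Ideal.ofList [linearForm u, linearForm u'] := by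
  have hu : linearForm u ∈ Ideal.ofList [linearForm u, linearForm u'] :=
    Ideal.subset_span (by simp)
  have hu' : linearForm u' ∈ Ideal.ofList [linearForm u, linearForm u'] :=
    Ideal.subset_span (by simp)
  refine ker_eq_ofList_of_linearForm_mem (u := u')
    (isWeaklyRegular_C_linearForm_pair 1 h h') hu' ?_ fun t ht ↦ ?_
  · simp [RingHom.mem_ker, reesMap_linearForm]
  · have hresultant : MvPolynomial.rename Fin.succ (linearForm ![(u' ⨯₃ u) 2, -(u' ⨯₃ u) 1]) =
        MvPolynomial.C (u' 0) * linearForm u - MvPolynomial.C (u 0) * linearForm u' := by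
      simp [linearForm, cross_apply, Fin.sum_univ_succ]
      ring
    rw [reesMap_rename_succ] at ht
    obtain ⟨s, rfl⟩ : linearForm ![(u' ⨯₃ u) 2, -(u' ⨯₃ u) 1] ∣ t := by
      rw [← Ideal.mem_span_singleton, ← Ideal.ofList_singleton]
      exact (ker_reesMap_pair (m := Fin.tail (u' ⨯₃ u)) hminor).le ht
    rw [map_mul, hresultant]
    exact Ideal.mul_mem_right _ _
      (sub_mem (Ideal.mul_mem_left _ _ hu) (Ideal.mul_mem_left _ _ hu'))

end LinearForms

theorem rees_algebra_presentation_general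
    {R : Type*} [CommRing R] [IsNoetherianRing R] [IsLocalRing R]
    (x y z : R) (hreg : RingTheory.Sequence.IsRegular R [x, y, z])
    (α β γ α' β' γ' : ℕ)
    (hα : 0 < α) (hγ : 0 < γ)
    (hα' : 0 < α') (hβ' : 0 < β') (hγ' : 0 < γ')
    (a b c : R)
    (ha : a = z ^ (γ + γ') - x ^ α' * y ^ β)
    (hb : b = x ^ (α + α') - y ^ β' * z ^ γ)
    (hc : c = y ^ (β + β') - x ^ α * z ^ γ')
    (I : Ideal R) (hI : I = Ideal.span {a, b, c})
    (f g : MvPolynomial (Fin 3) R)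
    (hf : f = MvPolynomial.C (x ^ α) * MvPolynomial.X 0 +
      MvPolynomial.C (y ^ β) * MvPolynomial.X 1 +
      MvPolynomial.C (z ^ γ) * MvPolynomial.X 2)
    (hg : g = MvPolynomial.C (y ^ β') * MvPolynomial.X 0 +
      MvPolynomial.C (z ^ γ') * MvPolynomial.X 1 +
      MvPolynomial.C (x ^ α') * MvPolynomial.X 2)
    (π : MvPolynomial (Fin 3) R →ₐ[R] Polynomial R)
    (hπ : π = MvPolynomial.aeval ![C a * X, C b * X, C c * X]) :
    RingTheory.Sequence.IsRegular (MvPolynomial (Fin 3) R) [f, g] ∧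
      π.range = reesAlgebra I ∧
      RingHom.ker π = Ideal.span {f, g} := by
  let u : Fin 3 → R := ![x ^ α, y ^ β, z ^ γ]
  let u' : Fin 3 → R := ![y ^ β', z ^ γ', x ^ α']
  have hminors : u' ⨯₃ u = ![a, b, c] := by
    simp [cross_apply, u, u', ha, hb, hc, pow_add, mul_comm]
  obtain rfl : f = linearForm u := by simp [hf, linearForm, u, Fin.sum_univ_three]
  obtain rfl : g = linearForm u' := by simp [hg, linearForm, u', Fin.sum_univ_three]
  obtain rfl : π = reesMap (u' ⨯₃ u) := by
    rw [hπ, hminors, reesMap]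
    congr 1
    ext i : 1
    fin_cases i <;> rfl
  obtain rfl : I = Ideal.span (Set.range (u' ⨯₃ u)) := by
    rw [hI, hminors]
    simp only [Matrix.range_cons, Matrix.range_empty, Set.union_empty, Set.singleton_union]
  have hyxz : IsRegular R [y, x, z] := isRegular_of_perm hreg (.swap y x [z])
  have hxzy : IsRegular R [x, z, y] := isRegular_of_perm hreg (.cons x (.swap z y []))
  have hcb : IsRegular R [c, b, z] := hb ▸ hc ▸ isRegular_minors hreg hγ hα' hβ' hγ'
  have hu : IsWeaklyRegular R [u 0, u 2] := isWeaklyRegular_of_append (rs' := [y ^ 1])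
    (isRegular_pow_triple hxzy hα.ne' hγ.ne' one_ne_zero).toIsWeaklyRegular
  have hu' : IsWeaklyRegular R [u' 0, u' 2] := isWeaklyRegular_of_append (rs' := [z ^ 1])
    (isRegular_pow_triple hyxz hβ'.ne' hα'.ne' one_ne_zero).toIsWeaklyRegular
  have hu'u : IsWeaklyRegular R [u' 0, u 0, u 2] :=
    (isRegular_pow_triple hyxz hβ'.ne' hα.ne' hγ.ne').toIsWeaklyRegular
  have hbreg : IsSMulRegular R (u 0 * u' 2 - u' 0 * u 2) := by
    have := (isRegular_of_perm hcb (.swap b c [z])).toIsWeaklyRegular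
    simpa [u, u', hb, pow_add] using ((isWeaklyRegular_cons_iff _ _ _).1 this).1
  have hcb' : IsWeaklyRegular R [(u' ⨯₃ u) 2, (u' ⨯₃ u) 1] :=
    isWeaklyRegular_of_append (rs' := [z]) (by simpa [hminors] using hcb.toIsWeaklyRegular)
  refine ⟨isRegular_of_forall_map_eq_zero (isWeaklyRegular_linearForm_pair 1 hu hbreg)
    MvPolynomial.constantCoeff (by simp [linearForm]), range_reesMap _, ?_⟩
  rw [ker_reesMap_crossProduct hu'u hu' hcb', Ideal.span_insert, Ideal.ofList_cons,
    Ideal.ofList_singleton]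

/-- With `S = R[A,B,C]` (deg A = deg B = deg C = 1),
`f = x^α A + y^β B + z^γ C` and `g = y^β' A + z^γ' B + x^α' C`, the pair `f, g`
is a regular sequence on `S` and `S/(f,g)` is isomorphic as a graded `R`-algebra
to the Rees algebra `R[It]`: the graded map `π : S → R[It] ⊆ R[t]`,
`A ↦ at, B ↦ bt, C ↦ ct`, has image `R[It]` and kernel `(f, g)`. -/
theorem rees_algebra_presentation
    {R : Type*} [CommRing R] [IsNoetherianRing R] [IsLocalRing R]
    (hdim : ringKrullDim R = 3)
    (hCM : ∀ u v w : R, (Ideal.span {u, v, w}).radical = maximalIdeal R →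
      RingTheory.Sequence.IsRegular R [u, v, w])
    (x y z : R) (hsop : (Ideal.span {x, y, z}).radical = maximalIdeal R)
    (α β γ α' β' γ' : ℕ)
    (hα : 0 < α) (hβ : 0 < β) (hγ : 0 < γ)
    (hα' : 0 < α') (hβ' : 0 < β') (hγ' : 0 < γ')
    (a b c : R)
    (ha : a = z ^ (γ + γ') - x ^ α' * y ^ β)
    (hb : b = x ^ (α + α') - y ^ β' * z ^ γ)
    (hc : c = y ^ (β + β') - x ^ α * z ^ γ')
    (I : Ideal R) (hI : I = Ideal.span {a, b, c})
    (f g : MvPolynomial (Fin 3) R)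
    (hf : f = MvPolynomial.C (x ^ α) * MvPolynomial.X 0 +
      MvPolynomial.C (y ^ β) * MvPolynomial.X 1 +
      MvPolynomial.C (z ^ γ) * MvPolynomial.X 2)
    (hg : g = MvPolynomial.C (y ^ β') * MvPolynomial.X 0 +
      MvPolynomial.C (z ^ γ') * MvPolynomial.X 1 +
      MvPolynomial.C (x ^ α') * MvPolynomial.X 2)
    (π : MvPolynomial (Fin 3) R →ₐ[R] Polynomial R)
    (hπ : π = MvPolynomial.aeval ![C a * X, C b * X, C c * X]) :
    RingTheory.Sequence.IsRegular (MvPolynomial (Fin 3) R) [f, g] ∧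
      π.range = reesAlgebra I ∧
      RingHom.ker π = Ideal.span {f, g} :=
  rees_algebra_presentation_general x y z (hCM x y z hsop) α β γ α' β' γ' hα hγ hα' hβ' hγ'
    a b c ha hb hc I hI f g hf hg π hπ
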